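/- Let d be a floppy graph metric with vertex set V and edge set E, and let τ be the family of all nonempty open subsets of (0,∞). If the cardinal λ = |[V]² \ E| is at most countable, then player I has a winning strategy in the metric-extending game Game_d(λ,τ). -/

import Mathlib

open scoped Classical

universe u

namespace GraphMetricPaper

variable {X : Type u}

/-- The vertex set `V = ⋃ E` of a graph given by an adjacency relation `E`. -/
def Vtx (E : X → X → Prop) : Set X := {x | ∃ y, E x y}

/-- Two points are joined by a walk in the graph `E`. -/
def Joined (E : X → X → Prop) (x y : X) : Prop :=
  ∃ (n : ℕ) (c : ℕ → X), c 0 = x ∧ c n = y ∧ ∀ i, i < n → E (c i) (c (i + 1))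

/-- The set of weights of walks from `x` to `y`. -/
def walkSums (E : X → X → Prop) (d : X → X → ℝ) (x y : X) : Set ℝ :=
  {s | ∃ (n : ℕ) (c : ℕ → X), c 0 = x ∧ c n = y ∧ (∀ i, i < n → E (c i) (c (i + 1))) ∧
    s = ∑ i ∈ Finset.range n, d (c i) (c (i + 1))}

/-- The shortest-path pseudometric `d̂` determined by a weight function `d` on a graph `E`. -/
noncomputable def hatd (E : X → X → Prop) (d : X → X → ℝ) (x y : X) : ℝ :=
  sInf (walkSums E d x y)

/-- The function `ď` bounding the possible extensions of `d` from below: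
`ď(x,y) = sup_{ab ∈ E} max {0, d(ab) - d̂(a,x) - d̂(y,b)}`. -/
noncomputable def checkd (E : X → X → Prop) (d : X → X → ℝ) (x y : X) : ℝ :=
  sSup ({0} ∪ {r | ∃ a b, E a b ∧ r = d a b - hatd E d a x - hatd E d y b})

/-- The pseudometric `d̈` on doubletons:
`d̈(xy,uv) = min {d̂(x,u) + d̂(y,v), d̂(x,v) + d̂(y,u)}`. -/
noncomputable def ddot (E : X → X → Prop) (d : X → X → ℝ) (x y u v : X) : ℝ :=
  min (hatd E d x u + hatd E d y v) (hatd E d x v + hatd E d y u)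

/-- `d` is a graph pseudometric with edge relation `E`:  `E` is a (symmetric, irreflexive)
connected graph, `d` is a nonnegative symmetric weight on the edges, and `d = d̂` on edges. -/
structure IsGraphPseudometric (E : X → X → Prop) (d : X → X → ℝ) : Prop where
  symm : ∀ ⦃a b⦄, E a b → E b a
  irrefl : ∀ a, ¬ E a a
  wt_symm : ∀ ⦃a b⦄, E a b → d a b = d b a
  nonneg : ∀ ⦃a b⦄, E a b → 0 ≤ d a b
  connected : ∀ x ∈ Vtx E, ∀ y ∈ Vtx E, Joined E x y
  edge_eq : ∀ ⦃a b⦄, E a b → d a b = hatd E d a b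

/-- A graph metric is a graph pseudometric with strictly positive weights. -/
def IsGraphMetric (E : X → X → Prop) (d : X → X → ℝ) : Prop :=
  IsGraphPseudometric E d ∧ ∀ ⦃a b⦄, E a b → 0 < d a b

/-- A floppy graph pseudometric: `ď(x,y) < d̂(x,y)` for every `xy ∈ [V]² \ E`. -/
def FloppyPseudometric (E : X → X → Prop) (d : X → X → ℝ) : Prop :=
  IsGraphPseudometric E d ∧
    ∀ x ∈ Vtx E, ∀ y ∈ Vtx E, x ≠ y → ¬ E x y → checkd E d x y < hatd E d x y

/-- A floppy graph metric: `ď(x,y) < d̂(x,y)` for every `xy ∈ [V]² \ E`. -/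
def FloppyMetric (E : X → X → Prop) (d : X → X → ℝ) : Prop :=
  IsGraphMetric E d ∧
    ∀ x ∈ Vtx E, ∀ y ∈ Vtx E, x ≠ y → ¬ E x y → checkd E d x y < hatd E d x y

/-- The edge relation of the one-step extension `E ∪ {xy}`. -/
def extEdge (E : X → X → Prop) (x y : X) : X → X → Prop :=
  fun a b => E a b ∨ (a = x ∧ b = y) ∨ (a = y ∧ b = x)

/-- The weight function of the one-step extension `d ∪ {⟨xy, r⟩}`. -/
noncomputable def extWt (d : X → X → ℝ) (x y : X) (r : ℝ) : X → X → ℝ :=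
  fun a b => if (a = x ∧ b = y) ∨ (a = y ∧ b = x) then r else d a b

/-- The set `[V]² \ E` of unordered pairs of distinct vertices that are not edges. -/
def nonEdgePairs (E : X → X → Prop) : Set (Sym2 X) :=
  {e | ∃ a b : X, e = s(a, b) ∧ a ≠ b ∧ a ∈ Vtx E ∧ b ∈ Vtx E ∧ ¬ E a b}

/-- A set of (unordered) weighted pairs, presented as a relation `R`, is a full metric
on `V`: it is symmetric, its domain is exactly `[V]²`, it is single-valued, positive,
and satisfies the triangle inequality. -/
def IsFullMetricRel (V : Set X) (R : X → X → ℝ → Prop) : Prop :=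
  (∀ a b r, R a b r → R b a r) ∧
  (∀ a b r, R a b r → a ∈ V ∧ b ∈ V ∧ a ≠ b) ∧
  (∀ a b, a ∈ V → b ∈ V → a ≠ b → ∃ r, R a b r) ∧
  (∀ a b r s, R a b r → R a b s → r = s) ∧
  (∀ a b r, R a b r → 0 < r) ∧
  (∀ a b c r s t, R a b r → R b c s → R a c t → t ≤ r + s)

/-- A weight function `D` on `[V]²` is a full metric on `V`. -/
def IsFullMetricOn (V : Set X) (D : X → X → ℝ) : Prop :=
  (∀ a b, a ∈ V → b ∈ V → a ≠ b → D a b = D b a) ∧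
  (∀ a b, a ∈ V → b ∈ V → a ≠ b → 0 < D a b) ∧
  (∀ a b c, a ∈ V → b ∈ V → c ∈ V → a ≠ b → b ≠ c → a ≠ c → D a c ≤ D a b + D b c)

/-- Player I has a winning strategy in the metric-extending game `Game_d(lam, Fam)`:
there are functions `S1, S2` choosing, for each inning `β < lam` and each sequence of
previous answers of player II, a legal doubleton in `[V]²` and a set from `Fam`, such that
for every play of player II respecting the strategy, the resulting relation
`d ∪ {⟨x_α y_α, r_α⟩ : α < lam}` is a full metric on `V`. -/
def WinningStratI (V : Set X) (E : X → X → Prop) (d : X → X → ℝ)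
    (lam : Ordinal.{u}) (Fam : Set (Set ℝ)) : Prop :=
  ∃ (S1 : ∀ β : Ordinal.{u}, β < lam → (∀ α : Ordinal.{u}, α < β → ℝ) → X × X)
    (S2 : ∀ β : Ordinal.{u}, β < lam → (∀ α : Ordinal.{u}, α < β → ℝ) → Set ℝ),
    (∀ β hβ s, S2 β hβ s ∈ Fam) ∧
    (∀ β hβ s, (S1 β hβ s).1 ∈ V ∧ (S1 β hβ s).2 ∈ V ∧ (S1 β hβ s).1 ≠ (S1 β hβ s).2) ∧
    (∀ s : ∀ α : Ordinal.{u}, α < lam → ℝ,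
      (∀ α (hα : α < lam), s α hα ∈ S2 α hα (fun γ hγ => s γ (hγ.trans hα))) →
      IsFullMetricRel V (fun a b r =>
        (E a b ∧ r = d a b) ∨
        ∃ α, ∃ hα : α < lam,
          ((a = (S1 α hα (fun γ hγ => s γ (hγ.trans hα))).1 ∧
            b = (S1 α hα (fun γ hγ => s γ (hγ.trans hα))).2) ∨
           (a = (S1 α hα (fun γ hγ => s γ (hγ.trans hα))).2 ∧
            b = (S1 α hα (fun γ hγ => s γ (hγ.trans hα))).1)) ∧
          r = s α hα))

/-- Player II has a winning strategy in the metric-extending game `Game_d(lam, Fam)`: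
there is a function `T` assigning to each inning `β < lam` and each sequence of moves of
player I (of length `β + 1`) an answer in the set component of the last move, such that
for every legal play of player I, the resulting relation is not a full metric on `V`. -/
def WinningStratII (V : Set X) (E : X → X → Prop) (d : X → X → ℝ)
    (lam : Ordinal.{u}) (Fam : Set (Set ℝ)) : Prop :=
  ∃ T : ∀ β : Ordinal.{u}, β < lam → (∀ α : Ordinal.{u}, α ≤ β → (X × X) × Set ℝ) → ℝ,
    (∀ β hβ p, (p β le_rfl).2 ∈ Fam → T β hβ p ∈ (p β le_rfl).2) ∧
    (∀ p : ∀ α : Ordinal.{u}, α < lam → (X × X) × Set ℝ,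
      (∀ α hα, (p α hα).1.1 ∈ V ∧ (p α hα).1.2 ∈ V ∧ (p α hα).1.1 ≠ (p α hα).1.2 ∧
        (p α hα).2 ∈ Fam) →
      ¬ IsFullMetricRel V (fun a b r =>
        (E a b ∧ r = d a b) ∨
        ∃ α, ∃ hα : α < lam,
          ((a = (p α hα).1.1 ∧ b = (p α hα).1.2) ∨
           (a = (p α hα).1.2 ∧ b = (p α hα).1.1)) ∧
          r = T α hα (fun γ hγ => p γ (lt_of_le_of_lt hγ hα))))

/-- The edge relation of the glued graph `E_d = E_p ∪ ⋃_{f ∈ F} E_f`. -/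
def gluedEdge (Ep : X → X → Prop) (F : Set ((X → X → Prop) × (X → X → ℝ))) :
    X → X → Prop :=
  fun a b => Ep a b ∨ ∃ f ∈ F, f.1 a b

/-- `Λ(v; B) = inf {d̂(a,v) + d̂(v,b) - d̂(a,b) : a, b ∈ B}`. -/
noncomputable def Lam (E : X → X → Prop) (d : X → X → ℝ) (v : X) (B : Set X) : ℝ :=
  sInf {r | ∃ a ∈ B, ∃ b ∈ B, r = hatd E d a v + hatd E d v b - hatd E d a b}

/-- The gluing setup: a graph pseudometric `p = (Ep, wp)` and a family `F` of graph
pseudometrics such that each member meets `V_p`, agrees with `p̂` on the intersection of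
the vertex sets, and distinct members only meet inside `V_p`; `wd` is the glued weight
function `d = p ∪ ⋃ F` on `E_d = E_p ∪ ⋃_{f ∈ F} E_f`. -/
structure GluingSetup (Ep : X → X → Prop) (wp : X → X → ℝ)
    (F : Set ((X → X → Prop) × (X → X → ℝ))) (wd : X → X → ℝ) : Prop where
  hp : IsGraphPseudometric Ep wp
  hF : ∀ f ∈ F, IsGraphPseudometric f.1 f.2
  meet : ∀ f ∈ F, (Vtx f.1 ∩ Vtx Ep).Nonempty
  agree : ∀ f ∈ F, ∀ x ∈ Vtx f.1 ∩ Vtx Ep, ∀ y ∈ Vtx f.1 ∩ Vtx Ep, x ≠ y →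
    hatd f.1 f.2 x y = hatd Ep wp x y
  inter_sub : ∀ f ∈ F, ∀ g ∈ F, f ≠ g → Vtx f.1 ∩ Vtx g.1 ⊆ Vtx Ep
  wd_p : ∀ ⦃a b⦄, Ep a b → wd a b = wp a b
  wd_F : ∀ f ∈ F, ∀ ⦃a b⦄, f.1 a b → wd a b = f.2 a b


theorem zero_mem_walkSums (E : X → X → Prop) (d : X → X → ℝ) (x : X) :
    (0 : ℝ) ∈ walkSums E d x x :=
  ⟨0, fun _ => x, rfl, rfl, by simp, by simp⟩

theorem walkSums_snoc {E : X → X → Prop} {d : X → X → ℝ} {x y z : X} {s : ℝ}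
    (hs : s ∈ walkSums E d x y) (h : E y z) : s + d y z ∈ walkSums E d x z := by
  obtain ⟨n, c, h0, hn, hc, rfl⟩ := hs
  refine ⟨n + 1, fun i => if i ≤ n then c i else z, by simp [h0], by simp, ?_, ?_⟩
  · intro i hi
    rcases Nat.lt_succ_iff_lt_or_eq.mp hi with hi | rfl
    · simpa [hi.le, Nat.succ_le_of_lt hi] using hc i hi
    · simpa [hn] using h
  · rw [Finset.sum_range_succ]
    congr 1
    · refine Finset.sum_congr rfl fun i hi => ?_
      have hi := Finset.mem_range.mp hi
      simp [hi.le, Nat.succ_le_of_lt hi]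
    · simp [hn]

/-- Induction along the walks that start at `x`. -/
theorem walkSums_induction {E : X → X → Prop} {d : X → X → ℝ} {x : X} {P : X → ℝ → Prop}
    (h0 : P x 0) (hstep : ∀ y z s, P y s → E y z → P z (s + d y z))
    {y : X} {s : ℝ} (hs : s ∈ walkSums E d x y) : P y s := by
  obtain ⟨n, c, hc0, rfl, hc, rfl⟩ := hs
  induction n with
  | zero => simpa [hc0] using h0
  | succ n ih =>
    rw [Finset.sum_range_succ]
    exact hstep _ _ _ (ih fun i hi => hc i (hi.trans n.lt_succ_self)) (hc n n.lt_succ_self)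

theorem walkSums_append {E : X → X → Prop} {d : X → X → ℝ} {x y z : X} {s t : ℝ}
    (hs : s ∈ walkSums E d x y) (ht : t ∈ walkSums E d y z) : s + t ∈ walkSums E d x z :=
  walkSums_induction (P := fun w t => s + t ∈ walkSums E d x w) (by simpa using hs)
    (fun v w t h hE => by rw [← add_assoc]; exact walkSums_snoc h hE) ht

theorem edge_mem_walkSums {E : X → X → Prop} {d : X → X → ℝ} {x y : X} (h : E x y) :
    d x y ∈ walkSums E d x y := by
  simpa using walkSums_snoc (zero_mem_walkSums E d x) h

section

variable {E : X → X → Prop} {d : X → X → ℝ}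

theorem walkSums_nonneg (h : ∀ a b, E a b → 0 ≤ d a b) {x y : X} {s : ℝ}
    (hs : s ∈ walkSums E d x y) : 0 ≤ s :=
  walkSums_induction (P := fun _ s => 0 ≤ s) le_rfl
    (fun _ _ _ hs hE => add_nonneg hs (h _ _ hE)) hs

theorem hatd_le_of_mem (h : ∀ a b, E a b → 0 ≤ d a b) {x y : X} {s : ℝ}
    (hs : s ∈ walkSums E d x y) : hatd E d x y ≤ s :=
  csInf_le ⟨0, fun _ ht => walkSums_nonneg h ht⟩ hs

theorem hatd_nonneg (h : ∀ a b, E a b → 0 ≤ d a b) (x y : X) : 0 ≤ hatd E d x y :=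
  Real.sInf_nonneg fun _ hs => walkSums_nonneg h hs

theorem checkd_nonneg (x y : X) : 0 ≤ checkd E d x y :=
  Real.sSup_nonneg' ⟨0, by simp, le_rfl⟩

namespace IsGraphPseudometric

theorem walkSums_nonempty (hd : IsGraphPseudometric E d) {x y : X} (hx : x ∈ Vtx E) (hy : y ∈ Vtx E) :
    (walkSums E d x y).Nonempty := by
  obtain ⟨n, c, h0, hn, hc⟩ := hd.connected x hx y hy
  exact ⟨_, n, c, h0, hn, hc, rfl⟩

theorem hatd_self (hd : IsGraphPseudometric E d) (x : X) : hatd E d x x = 0 :=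
  le_antisymm (hatd_le_of_mem hd.nonneg (zero_mem_walkSums E d x)) (hatd_nonneg hd.nonneg x x)

theorem walkSums_symm (hd : IsGraphPseudometric E d) {x y : X} {s : ℝ} (hs : s ∈ walkSums E d x y) :
    s ∈ walkSums E d y x :=
  walkSums_induction (P := fun w t => t ∈ walkSums E d w x) (zero_mem_walkSums E d x)
    (fun v w t h hE => by
      rw [add_comm, hd.wt_symm hE]
      exact walkSums_append (edge_mem_walkSums (hd.symm hE)) h) hs

theorem hatd_comm (hd : IsGraphPseudometric E d) (x y : X) : hatd E d x y = hatd E d y x :=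
  congrArg sInf (Set.ext fun _ => ⟨hd.walkSums_symm, hd.walkSums_symm⟩)

theorem hatd_triangle (hd : IsGraphPseudometric E d) {x y z : X} (hx : x ∈ Vtx E) (hy : y ∈ Vtx E) (hz : z ∈ Vtx E) :
    hatd E d x z ≤ hatd E d x y + hatd E d y z := by
  refine le_of_forall_pos_le_add fun ε hε => ?_
  obtain ⟨s, hs, hs'⟩ := Real.lt_sInf_add_pos (hd.walkSums_nonempty hx hy) (half_pos hε)
  obtain ⟨t, ht, ht'⟩ := Real.lt_sInf_add_pos (hd.walkSums_nonempty hy hz) (half_pos hε)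
  have := hatd_le_of_mem hd.nonneg (walkSums_append hs ht)
  simp only [hatd] at *
  linarith

theorem right_mem (hd : IsGraphPseudometric E d) {a b : X} (h : E a b) : b ∈ Vtx E := ⟨a, hd.symm h⟩

theorem le_checkd (hd : IsGraphPseudometric E d) {x y a b : X} (hx : x ∈ Vtx E) (hy : y ∈ Vtx E) (h : E a b) :
    d a b ≤ hatd E d a x + checkd E d x y + hatd E d y b := by
  have : d a b - hatd E d a x - hatd E d y b ≤ checkd E d x y := by
    refine le_csSup ⟨hatd E d x y, ?_⟩ (Or.inr ⟨a, b, h, rfl⟩)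
    rintro _ (rfl | ⟨a, b, h, rfl⟩)
    · exact hatd_nonneg hd.nonneg x y
    · have ha : a ∈ Vtx E := ⟨b, h⟩
      have hb := hd.right_mem h
      have h1 := hd.hatd_triangle ha hx hb
      have h2 := hd.hatd_triangle hx hy hb
      rw [hd.edge_eq h]
      linarith
  linarith

end IsGraphPseudometric

theorem FloppyMetric.hatd_pos (hd : FloppyMetric E d) {x y : X} (hx : x ∈ Vtx E)
    (hy : y ∈ Vtx E) (hxy : x ≠ y) : 0 < hatd E d x y := by
  by_cases h : E x y
  · rw [← hd.1.1.edge_eq h]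
    exact hd.1.2 h
  · exact (checkd_nonneg x y).trans_lt (hd.2 x hx y hy hxy h)

end

section OneStep

variable {E : X → X → Prop} {d : X → X → ℝ} {x y : X} {r : ℝ}

theorem Vtx_extEdge (hx : x ∈ Vtx E) (hy : y ∈ Vtx E) : Vtx (extEdge E x y) = Vtx E := by
  ext a
  constructor
  · rintro ⟨b, h | ⟨rfl, -⟩ | ⟨rfl, -⟩⟩
    exacts [⟨b, h⟩, hx, hy]
  · rintro ⟨b, h⟩
    exact ⟨b, Or.inl h⟩

theorem extWt_of_edge (hd : IsGraphPseudometric E d) (hE : ¬ E x y) {a b : X} (h : E a b) :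
    extWt d x y r a b = d a b := by
  refine if_neg ?_
  rintro (⟨rfl, rfl⟩ | ⟨rfl, rfl⟩)
  exacts [hE h, hE (hd.symm h)]

theorem extWt_left (d : X → X → ℝ) (x y : X) (r : ℝ) : extWt d x y r x y = r := by
  simp [extWt]

theorem extWt_right (d : X → X → ℝ) (x y : X) (r : ℝ) : extWt d x y r y x = r := by
  simp [extWt]

/-- The shortest-path pseudometric of the one-step extension, computed from `d̂`. -/
noncomputable def hatExt (E : X → X → Prop) (d : X → X → ℝ) (x y : X) (r : ℝ) (u v : X) : ℝ :=
  min (hatd E d u v)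
    (min (hatd E d u x + r + hatd E d y v) (hatd E d u y + r + hatd E d x v))

theorem hatExt_comm (E : X → X → Prop) (d : X → X → ℝ) (x y : X) (r : ℝ) (u v : X) :
    hatExt E d x y r u v = hatExt E d y x r u v :=
  congrArg (min (hatd E d u v)) (min_comm _ _)

theorem hatExt_cases (E : X → X → Prop) (d : X → X → ℝ) (x y : X) (r : ℝ) (u v : X) :
    hatExt E d x y r u v = hatd E d u v ∨
    hatExt E d x y r u v = hatd E d u x + r + hatd E d y v ∨
    hatExt E d x y r u v = hatd E d u y + r + hatd E d x v := by
  unfold hatExt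
  grind

theorem hatExt_le_of_mem (hd : IsGraphPseudometric E d) (hx : x ∈ Vtx E) (hy : y ∈ Vtx E)
    (hE : ¬ E x y) (hr : 0 ≤ r) {u v : X} {s : ℝ} (hu : u ∈ Vtx E)
    (hs : s ∈ walkSums (extEdge E x y) (extWt d x y r) u v) : hatExt E d x y r u v ≤ s := by
  refine (walkSums_induction (P := fun v s => v ∈ Vtx E ∧ hatExt E d x y r u v ≤ s)
    ⟨hu, ?_⟩ ?_ hs).2
  · exact (min_le_left _ _).trans (hd.hatd_self u).le
  · rintro v w s ⟨hv, h⟩ (hvw | ⟨rfl, rfl⟩ | ⟨rfl, rfl⟩)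
    · have hw := hd.right_mem hvw
      refine ⟨hw, ?_⟩
      rw [extWt_of_edge hd hE hvw, hd.edge_eq hvw]
      have h1 := hd.hatd_triangle hu hv hw
      have h2 := hd.hatd_triangle hx hv hw
      have h3 := hd.hatd_triangle hy hv hw
      simp only [hatExt, min_le_iff] at h ⊢
      rcases h with h | h | h
      · left; linarith
      · right; left; linarith
      · right; right; linarith
    · refine ⟨hy, ?_⟩
      rw [extWt_left]
      have h1 := hatd_nonneg hd.nonneg w v
      have h2 := hd.hatd_self v
      have h3 := hd.hatd_self w
      simp only [hatExt, min_le_iff] at h ⊢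
      rcases h with h | h | h
      · right; left; linarith
      · right; left; linarith
      · left; linarith
    · refine ⟨hx, ?_⟩
      rw [extWt_right]
      have h1 := hatd_nonneg hd.nonneg w v
      have h2 := hd.hatd_self v
      have h3 := hd.hatd_self w
      simp only [hatExt, min_le_iff] at h ⊢
      rcases h with h | h | h
      · right; right; linarith
      · left; linarith
      · right; right; linarith

/-- The one-step extension of a floppy graph metric by any value strictly between `ď(x,y)`
and `d̂(x,y)` is a floppy graph metric. -/
theorem FloppyMetric.extend (hd : FloppyMetric E d) (hx : x ∈ Vtx E) (hy : y ∈ Vtx E)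
    (hxy : x ≠ y) (hE : ¬ E x y) (hr : checkd E d x y < r) (hr' : r < hatd E d x y) :
    FloppyMetric (extEdge E x y) (extWt d x y r) := by
  have hg := hd.1.1
  have hr0 : 0 < r := (checkd_nonneg x y).trans_lt hr
  have hV := Vtx_extEdge hx hy
  have hpos : ∀ ⦃a b⦄, extEdge E x y a b → 0 < extWt d x y r a b := by
    rintro a b (h | ⟨rfl, rfl⟩ | ⟨rfl, rfl⟩)
    · rw [extWt_of_edge hg hE h]; exact hd.1.2 h
    · rwa [extWt_left]
    · rwa [extWt_right]
  have hsub : ∀ u v, walkSums E d u v ⊆ walkSums (extEdge E x y) (extWt d x y r) u v := by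
    intro u v s hs
    refine walkSums_induction
      (P := fun v s => s ∈ walkSums (extEdge E x y) (extWt d x y r) u v)
      (zero_mem_walkSums _ _ u) (fun v w s h hvw => ?_) hs
    rw [← extWt_of_edge (r := r) hg hE hvw]
    exact walkSums_snoc h (Or.inl hvw)
  have hlow : ∀ u ∈ Vtx E, ∀ v ∈ Vtx E,
      hatExt E d x y r u v ≤ hatd (extEdge E x y) (extWt d x y r) u v := fun u hu v hv =>
    le_csInf ((hg.walkSums_nonempty hu hv).mono (hsub u v)) fun s hs =>
      hatExt_le_of_mem hg hx hy hE hr0.le hu hs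
  have hbound : ∀ a b, E a b → d a b ≤ hatd E d a x + checkd E d x y + hatd E d y b ∧
      d a b ≤ hatd E d a y + checkd E d x y + hatd E d x b := by
    intro a b h
    refine ⟨hg.le_checkd hx hy h, ?_⟩
    have := hg.le_checkd hx hy (hg.symm h)
    rw [hg.wt_symm h, hg.hatd_comm a y, hg.hatd_comm x b]
    linarith
  have hedge : ∀ a b, extEdge E x y a b → extWt d x y r a b ≤ hatExt E d x y r a b := by
    rintro a b (h | ⟨rfl, rfl⟩ | ⟨rfl, rfl⟩)
    · rw [extWt_of_edge hg hE h]
      have := hbound a b h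
      exact le_min (hg.edge_eq h).le (le_min (by linarith) (by linarith))
    · rw [extWt_left]
      have h1 := hatd_nonneg hg.nonneg
      exact le_min hr'.le (le_min (by linarith [h1 a a, h1 b b]) (by linarith [h1 a b, h1 a b]))
    · rw [extWt_right]
      have h1 := hatd_nonneg hg.nonneg
      rw [hg.hatd_comm] at hr'
      exact le_min hr'.le (le_min (by linarith [h1 a b, h1 a b]) (by linarith [h1 a a, h1 b b]))
  have hsymm : ∀ ⦃a b⦄, extEdge E x y a b → extEdge E x y b a := by
    rintro a b (h | ⟨rfl, rfl⟩ | ⟨rfl, rfl⟩)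
    exacts [Or.inl (hg.symm h), Or.inr (Or.inr ⟨rfl, rfl⟩), Or.inr (Or.inl ⟨rfl, rfl⟩)]
  have hmem : ∀ a b, extEdge E x y a b → a ∈ Vtx E ∧ b ∈ Vtx E := fun a b h =>
    ⟨hV ▸ ⟨b, h⟩, hV ▸ ⟨a, hsymm h⟩⟩
  refine ⟨⟨⟨hsymm, ?_, ?_, fun a b h => (hpos h).le, ?_, ?_⟩, hpos⟩, ?_⟩
  · rintro a (h | ⟨rfl, h⟩ | ⟨rfl, h⟩)
    exacts [hg.irrefl a h, hxy h, hxy h.symm]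
  · rintro a b (h | ⟨rfl, rfl⟩ | ⟨rfl, rfl⟩)
    · rw [extWt_of_edge hg hE h, extWt_of_edge hg hE (hg.symm h), hg.wt_symm h]
    · rw [extWt_left, extWt_right]
    · rw [extWt_left, extWt_right]
  · rw [hV]
    intro a ha b hb
    obtain ⟨n, c, h0, hn, hc⟩ := hg.connected a ha b hb
    exact ⟨n, c, h0, hn, fun i hi => Or.inl (hc i hi)⟩
  · intro a b h
    obtain ⟨ha, hb⟩ := hmem a b h
    exact le_antisymm ((hedge a b h).trans (hlow a ha b hb))
      (hatd_le_of_mem (fun a b h => (hpos h).le) (edge_mem_walkSums h))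
  · rw [hV]
    intro u hu v hv huv hE'
    have hEuv : ¬ E u v := fun h => hE' (Or.inl h)
    have hfl := hd.2 u hu v hv huv hEuv
    refine lt_of_lt_of_le ?_ (hlow u hu v hv)
    have hn := hatd_nonneg hg.nonneg
    have huvp := hd.hatd_pos hu hv huv
    have hMpos : 0 < hatExt E d x y r u v := by
      refine lt_min huvp (lt_min ?_ ?_)
      · linarith [hn u x, hn y v]
      · linarith [hn u y, hn x v]
    have hnew : ∀ p q, p ∈ Vtx E → q ∈ Vtx E → r < hatd E d p q → ¬ (u = p ∧ v = q) →
        0 < hatExt E d p q r u v →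
        r - hatExt E d p q r p u - hatExt E d p q r v q < hatExt E d p q r u v := by
      intro p q hp hq hpq hne hM
      have t1 := hg.hatd_triangle hp hu hq
      have t2 := hg.hatd_triangle hu hv hq
      have c1 := hg.hatd_comm p u
      have c2 := hg.hatd_comm q v
      have c3 := hg.hatd_comm q u
      have hzero : 0 < hatd E d p u + hatd E d v q := by
        by_cases h : u = p
        · have := hd.hatd_pos hv hq fun h' => hne ⟨h, h'⟩
          linarith [hn p u]
        · have := hd.hatd_pos hp hu (Ne.symm h)
          linarith [hn v q]
      have n1 := hn p u
      have n2 := hn q u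
      have n3 := hn v q
      have n4 := hn v p
      have n5 := hn p q
      have n6 := hn p p
      have n7 := hn q q
      have n8 := hn p v
      rcases hatExt_cases E d p q r p u with e1 | e1 | e1 <;>
      rcases hatExt_cases E d p q r v q with e2 | e2 | e2 <;>
      rcases hatExt_cases E d p q r u v with e3 | e3 | e3 <;>
      linarith
    have hold : ∀ a b, E a b → d a b - hatExt E d x y r a u - hatExt E d x y r v b ≤
        hatExt E d x y r u v - min (hatd E d u v - checkd E d u v) (r - checkd E d x y) := by
      intro a b h
      have ha : a ∈ Vtx E := ⟨b, h⟩
      have hb := hg.right_mem h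
      have m1 := min_le_left (hatd E d u v - checkd E d u v) (r - checkd E d x y)
      have m2 := min_le_right (hatd E d u v - checkd E d u v) (r - checkd E d x y)
      generalize min (hatd E d u v - checkd E d u v) (r - checkd E d x y) = δ at m1 m2 ⊢
      obtain ⟨b1, b2⟩ := hbound a b h
      have b3 := hg.le_checkd hu hv h
      have b4 := checkd_nonneg (E := E) (d := d) x y
      have e := hg.edge_eq h
      have c1 := hg.hatd_comm x u
      have c2 := hg.hatd_comm y u
      have c3 := hg.hatd_comm x v
      have c4 := hg.hatd_comm y v
      have t1 := hg.hatd_triangle ha hu hx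
      have t2 := hg.hatd_triangle ha hu hy
      have t3 := hg.hatd_triangle hx hv hb
      have t4 := hg.hatd_triangle hy hv hb
      have t5 := hg.hatd_triangle hx hu hv
      have t6 := hg.hatd_triangle hy hu hv
      have t7 := hg.hatd_triangle hu hv hx
      have t8 := hg.hatd_triangle hu hv hy
      have t9 := hg.hatd_triangle ha hx hb
      have t10 := hg.hatd_triangle ha hy hb
      have n1 := hn u x
      have n2 := hn u y
      have n3 := hn x v
      have n4 := hn y v
      have n5 := hn a x
      have n6 := hn a y
      have n7 := hn x b
      have n8 := hn y b
      rcases hatExt_cases E d x y r a u with e1 | e1 | e1 <;>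
      rcases hatExt_cases E d x y r v b with e2 | e2 | e2 <;>
      rcases hatExt_cases E d x y r u v with e3 | e3 | e3 <;>
      linarith
    have h1 := hnew x y hx hy hr' (fun h => hE' (Or.inr (Or.inl h))) hMpos
    have h2 := hnew y x hy hx (hg.hatd_comm x y ▸ hr') (fun h => hE' (Or.inr (Or.inr h)))
      (by rwa [hatExt_comm])
    simp only [hatExt_comm E d y x] at h2
    have h3 : hatExt E d x y r u v - min (hatd E d u v - checkd E d u v) (r - checkd E d x y) <
        hatExt E d x y r u v := sub_lt_self _ (lt_min (by linarith) (by linarith))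
    refine lt_of_le_of_lt (csSup_le ⟨0, Or.inl rfl⟩ ?_)
      (max_lt hMpos (max_lt h1 (max_lt h2 h3)))
    simp only [le_max_iff]
    rintro _ (rfl | ⟨a, b, h, rfl⟩)
    · exact Or.inl le_rfl
    · obtain ⟨ha, hb⟩ := hmem a b h
      have hau := hlow a ha u hu
      have hvb := hlow v hv b hb
      right
      rcases h with h | ⟨rfl, rfl⟩ | ⟨rfl, rfl⟩
      · have := hold a b h
        rw [extWt_of_edge hg hE h]
        right; right; linarith
      · rw [extWt_left]
        left; linarith
      · rw [extWt_right]
        right; left; linarith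

end OneStep

section Stages

/-- The finite stages of the game: the graph and the weights after the first `n` innings, when
player I plays the pairs `e` and player II answers with `f`. -/
noncomputable def stage (E : X → X → Prop) (d : X → X → ℝ) (e : ℕ → X × X) (f : ℕ → ℝ) :
    ℕ → (X → X → Prop) × (X → X → ℝ)
  | 0 => (E, d)
  | n + 1 => (extEdge (stage E d e f n).1 (e n).1 (e n).2,
      extWt (stage E d e f n).2 (e n).1 (e n).2 (f n))

variable {E : X → X → Prop} {d : X → X → ℝ} {e : ℕ → X × X} {f : ℕ → ℝ}

theorem stage_congr {g : ℕ → ℝ} {n : ℕ} (h : ∀ m < n, f m = g m) :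
    stage E d e f n = stage E d e g n := by
  induction n with
  | zero => rfl
  | succ n ih =>
    simp only [stage, ih fun m hm => h m (hm.trans n.lt_succ_self), h n n.lt_succ_self]

theorem stage_edge_iff {n : ℕ} {a b : X} :
    (stage E d e f n).1 a b ↔ E a b ∨ ∃ m < n, s(a, b) = s((e m).1, (e m).2) := by
  induction n with
  | zero => simp [stage]
  | succ n ih =>
    simp only [stage, extEdge, ih, Nat.lt_succ_iff_lt_or_eq, Sym2.eq_iff, or_and_right,
      exists_or, exists_eq_left, or_assoc]

/-- The open set offered by player I when the graph metric reached so far is `(E, d)`. -/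
noncomputable def offer (E : X → X → Prop) (d : X → X → ℝ) (p : X × X) : Set ℝ :=
  if checkd E d p.1 p.2 < hatd E d p.1 p.2 then
    Set.Ioo (checkd E d p.1 p.2) (hatd E d p.1 p.2)
  else Set.Ioi 0

theorem offer_mem (E : X → X → Prop) (d : X → X → ℝ) (p : X × X) :
    offer E d p ∈ {U : Set ℝ | U.Nonempty ∧ IsOpen U ∧ U ⊆ Set.Ioi (0 : ℝ)} := by
  unfold offer
  split_ifs with h
  · exact ⟨Set.nonempty_Ioo.mpr h, isOpen_Ioo, fun r hr => (checkd_nonneg _ _).trans_lt hr.1⟩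
  · exact ⟨Set.nonempty_Ioi, isOpen_Ioi, subset_rfl⟩

theorem stage_floppy (hd : FloppyMetric E d) {n : ℕ}
    (hV : ∀ m < n, (e m).1 ∈ Vtx E ∧ (e m).2 ∈ Vtx E ∧ (e m).1 ≠ (e m).2)
    (hE : ∀ m < n, ¬ (stage E d e f m).1 (e m).1 (e m).2)
    (hf : ∀ m < n, f m ∈ offer (stage E d e f m).1 (stage E d e f m).2 (e m)) :
    FloppyMetric (stage E d e f n).1 (stage E d e f n).2 ∧ Vtx (stage E d e f n).1 = Vtx E := by
  induction n with
  | zero => exact ⟨hd, rfl⟩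
  | succ n ih =>
    obtain ⟨ih, ihV⟩ := ih (fun m hm => hV m (hm.trans n.lt_succ_self))
      (fun m hm => hE m (hm.trans n.lt_succ_self)) (fun m hm => hf m (hm.trans n.lt_succ_self))
    obtain ⟨hx, hy, hxy⟩ := hV n n.lt_succ_self
    rw [← ihV] at hx hy
    have hEn := hE n n.lt_succ_self
    have hfn := hf n n.lt_succ_self
    rw [offer, if_pos (ih.2 _ hx _ hy hxy hEn)] at hfn
    exact ⟨ih.extend hx hy hxy hEn hfn.1 hfn.2, (Vtx_extEdge hx hy).trans ihV⟩

theorem stage_weight_mono {n k : ℕ} (hnk : n ≤ k)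
    (hg : ∀ m < k, IsGraphPseudometric (stage E d e f m).1 (stage E d e f m).2)
    (hE : ∀ m < k, ¬ (stage E d e f m).1 (e m).1 (e m).2) {a b : X}
    (h : (stage E d e f n).1 a b) :
    (stage E d e f k).1 a b ∧ (stage E d e f k).2 a b = (stage E d e f n).2 a b := by
  induction k, hnk using Nat.le_induction with
  | base => exact ⟨h, rfl⟩
  | succ k hk ih =>
    obtain ⟨h1, h2⟩ := ih (fun m hm => hg m (hm.trans k.lt_succ_self))
      (fun m hm => hE m (hm.trans k.lt_succ_self))
    exact ⟨Or.inl h1, (extWt_of_edge (hg k k.lt_succ_self) (hE k k.lt_succ_self) h1).trans h2⟩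

end Stages

/-- A countable set `S` of pairs can be enumerated injectively by the ordinals below its
cardinal, all of which are finite. -/
theorem exists_enumeration [Nonempty X] {S : Set (Sym2 X)} (hS : S.Countable) :
    ∃ e : ℕ → Sym2 X, (∀ n : ℕ, (n : Ordinal.{u}) < (Cardinal.mk S).ord → e n ∈ S) ∧
      (∀ m n : ℕ, (m : Ordinal.{u}) < (Cardinal.mk S).ord →
        (n : Ordinal.{u}) < (Cardinal.mk S).ord → e m = e n → m = n) ∧
      (∀ z ∈ S, ∃ n : ℕ, (n : Ordinal.{u}) < (Cardinal.mk S).ord ∧ e n = z) := by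
  have hfin : (Cardinal.mk S).ord ≤ Ordinal.omega0 :=
    Cardinal.ord_le_omega0.mpr (Cardinal.mk_le_aleph0_iff.mpr hS.to_subtype)
  obtain ⟨φ⟩ := Cardinal.eq.mp (Cardinal.mk_ord_toType (Cardinal.mk S))
  let g : Set.Iio (Cardinal.mk S).ord ≃ S := Ordinal.ToType.mk.toEquiv.trans φ
  let z₀ : Sym2 X := s(Classical.arbitrary X, Classical.arbitrary X)
  refine ⟨fun n => if h : (n : Ordinal.{u}) < (Cardinal.mk S).ord then (g ⟨n, h⟩ : Sym2 X)
    else z₀, ?_, ?_, ?_⟩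
  · intro n hn
    simp [hn]
  · intro m n hm hn h
    have := congrArg Subtype.val (g.injective (Subtype.ext (by simpa [hm, hn] using h)) :
      (⟨m, hm⟩ : Set.Iio (Cardinal.mk S).ord) = ⟨n, hn⟩)
    exact Nat.cast_injective this
  · intro z hz
    obtain ⟨⟨β, hβ⟩, hβz⟩ := g.surjective ⟨z, hz⟩
    obtain ⟨n, rfl⟩ := Ordinal.lt_omega0.mp (lt_of_lt_of_le hβ hfin)
    have hβ' : (n : Ordinal.{u}) < (Cardinal.mk S).ord := hβ
    exact ⟨n, hβ', by simp [hβ', hβz]⟩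

theorem mk_mem_nonEdgePairs {E : X → X → Prop} (hE : ∀ ⦃a b⦄, E a b → E b a) {x y : X} :
    s(x, y) ∈ nonEdgePairs E ↔ x ≠ y ∧ x ∈ Vtx E ∧ y ∈ Vtx E ∧ ¬ E x y := by
  constructor
  · rintro ⟨a, b, h, hab, ha, hb, hEab⟩
    rcases Sym2.eq_iff.mp h with ⟨rfl, rfl⟩ | ⟨rfl, rfl⟩
    exacts [⟨hab, ha, hb, hEab⟩, ⟨hab.symm, hb, ha, fun h => hEab (hE h)⟩]
  · rintro ⟨hxy, hx, hy, h⟩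
    exact ⟨x, y, rfl, hxy, hx, hy, h⟩

/-- If `d` is a floppy graph metric and the cardinal
`λ = |[V]² \ E|` is at most countable, then player I has a winning strategy in the
metric-extending game `Game_d(λ, τ)`, where `τ` is the family of all nonempty open
subsets of `(0, ∞)`. -/
theorem playerI_winning_strategy (E : X → X → Prop) (d : X → X → ℝ)
    (hd : FloppyMetric E d) (hcount : (nonEdgePairs E).Countable) :
    WinningStratI (Vtx E) E d (Cardinal.mk ↥(nonEdgePairs E)).ord
      {U : Set ℝ | U.Nonempty ∧ IsOpen U ∧ U ⊆ Set.Ioi (0 : ℝ)} := by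
  have hg := hd.1.1
  have hfin : (Cardinal.mk ↥(nonEdgePairs E)).ord ≤ Ordinal.omega0 :=
    Cardinal.ord_le_omega0.mpr (Cardinal.mk_le_aleph0_iff.mpr hcount.to_subtype)
  rcases isEmpty_or_nonempty X with hX | hX
  · have hzero : (Cardinal.mk ↥(nonEdgePairs E)).ord = 0 := by
      rw [Cardinal.ord_eq_zero, Cardinal.mk_eq_zero_iff]
      exact ⟨fun ⟨z, a, _⟩ => hX.elim a⟩
    refine ⟨fun β hβ => absurd (hzero ▸ hβ) not_lt_zero, fun _ _ _ => Set.Ioi 0,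
      fun β hβ => absurd (hzero ▸ hβ) not_lt_zero, fun β hβ => absurd (hzero ▸ hβ) not_lt_zero,
      fun _ _ => ⟨?_, ?_, ?_, ?_, ?_, ?_⟩⟩ <;> exact fun a => hX.elim a
  obtain ⟨z, hzS, hzinj, hzsurj⟩ := exists_enumeration hcount
  generalize (Cardinal.mk ↥(nonEdgePairs E)).ord = lam at hfin hzS hzinj hzsurj ⊢
  have hnat : ∀ β < lam, ∃ n : ℕ, β = n := fun β hβ =>
    Ordinal.lt_omega0.mp (hβ.trans_le hfin)
  choose ν hν using hnat
  have hνn : ∀ (n : ℕ) (hn : (n : Ordinal.{u}) < lam), ν n hn = n := fun n hn => by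
    exact_mod_cast (hν n hn).symm
  have hpair : ∀ n, ∃ p : X × X, z n = s(p.1, p.2) := fun n =>
    (z n).ind fun x y => ⟨(x, y), rfl⟩
  choose e he using hpair
  have heV : ∀ n : ℕ, (n : Ordinal.{u}) < lam →
      (e n).1 ≠ (e n).2 ∧ (e n).1 ∈ Vtx E ∧ (e n).2 ∈ Vtx E ∧ ¬ E (e n).1 (e n).2 :=
    fun n hn => (mk_mem_nonEdgePairs hg.symm).mp (he n ▸ hzS n hn)
  let answers (β : Ordinal.{u}) (t : ∀ α : Ordinal.{u}, α < β → ℝ) (m : ℕ) : ℝ :=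
    if h : (m : Ordinal.{u}) < β then t m h else 0
  refine ⟨fun β hβ _ => e (ν β hβ),
    fun β hβ t => offer (stage E d e (answers β t) (ν β hβ)).1
      (stage E d e (answers β t) (ν β hβ)).2 (e (ν β hβ)),
    fun β hβ t => offer_mem _ _ _, fun β hβ t => ?_, fun s hs => ?_⟩
  · have := heV (ν β hβ) (hν β hβ ▸ hβ)
    exact ⟨this.2.1, this.2.2.1, this.1⟩
  set f : ℕ → ℝ := answers lam s with hf
  have hfs : ∀ (n : ℕ) (hn : (n : Ordinal.{u}) < lam), s n hn = f n := fun n hn => by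
    simp [hf, answers, hn]
  have hmove : ∀ n : ℕ, (n : Ordinal.{u}) < lam →
      f n ∈ offer (stage E d e f n).1 (stage E d e f n).2 (e n) := by
    intro n hn
    have h := hs n hn
    beta_reduce at h
    rw [hνn n hn, hfs n hn] at h
    rwa [stage_congr (g := f)] at h
    intro m hm
    have hm' : (m : Ordinal.{u}) < n := by exact_mod_cast hm
    simp only [hf, answers, hm', hm'.trans hn, dite_true]
  have hnew : ∀ n : ℕ, (n : Ordinal.{u}) < lam → ¬ (stage E d e f n).1 (e n).1 (e n).2 := by
    intro n hn h
    rcases stage_edge_iff.mp h with h | ⟨m, hm, h⟩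
    · exact (heV n hn).2.2.2 h
    · have hm' : (m : Ordinal.{u}) < n := by exact_mod_cast hm
      rw [← he, ← he] at h
      exact hm.ne (hzinj n m hn (hm'.trans hn) h).symm
  let Legal (n : ℕ) : Prop := ∀ m < n, (m : Ordinal.{u}) < lam
  have hstage : ∀ n, Legal n → FloppyMetric (stage E d e f n).1 (stage E d e f n).2 ∧
      Vtx (stage E d e f n).1 = Vtx E := fun n hn =>
    stage_floppy hd (fun m hm => ⟨(heV m (hn m hm)).2.1, (heV m (hn m hm)).2.2.1,
      (heV m (hn m hm)).1⟩) (fun m hm => hnew m (hn m hm)) (fun m hm => hmove m (hn m hm))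
  have hmono : ∀ n k, n ≤ k → Legal k → ∀ a b, (stage E d e f n).1 a b →
      (stage E d e f k).1 a b ∧ (stage E d e f k).2 a b = (stage E d e f n).2 a b :=
    fun n k hnk hk a b h => stage_weight_mono hnk
      (fun m hm => (hstage m fun i hi => hk i (hi.trans hm)).1.1.1)
      (fun m hm => hnew m (hk m hm)) h
  have hmax : ∀ n k, Legal n → Legal k → Legal (max n k) := fun n k hn hk m hm =>
    (lt_max_iff.mp hm).elim (hn m) (hk m)
  set R : X → X → ℝ → Prop := fun a b r => (E a b ∧ r = d a b) ∨ ∃ α, ∃ hα : α < lam,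
    ((a = (e (ν α hα)).1 ∧ b = (e (ν α hα)).2) ∨ (a = (e (ν α hα)).2 ∧ b = (e (ν α hα)).1)) ∧
    r = s α hα
  have hR : ∀ a b r, R a b r → ∃ n, Legal n ∧ (stage E d e f n).1 a b ∧
      (stage E d e f n).2 a b = r := by
    rintro a b r (⟨h, rfl⟩ | ⟨α, hα, h, rfl⟩)
    · exact ⟨0, fun m hm => absurd hm m.not_lt_zero, h, rfl⟩
    · obtain ⟨n, rfl⟩ : ∃ n : ℕ, α = n := ⟨_, hν α hα⟩
      rw [hνn n hα] at h
      refine ⟨n + 1, fun m hm => lt_of_le_of_lt ?_ hα, Or.inr h, ?_⟩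
      · exact_mod_cast Nat.lt_succ_iff.mp hm
      · rw [hfs]
        exact if_pos h
  have hR₂ : ∀ a b r a' b' r', R a b r → R a' b' r' → ∃ n, Legal n ∧
      ((stage E d e f n).1 a b ∧ (stage E d e f n).2 a b = r) ∧
      ((stage E d e f n).1 a' b' ∧ (stage E d e f n).2 a' b' = r') := by
    intro a b r a' b' r' h h'
    obtain ⟨n, hn, h1, rfl⟩ := hR a b r h
    obtain ⟨k, hk, h2, rfl⟩ := hR a' b' r' h'
    exact ⟨max n k, hmax n k hn hk, hmono n _ (le_max_left n k) (hmax n k hn hk) a b h1,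
      hmono k _ (le_max_right n k) (hmax n k hn hk) a' b' h2⟩
  refine ⟨?_, ?_, ?_, ?_, ?_, ?_⟩
  · rintro a b r (⟨h, rfl⟩ | ⟨α, hα, h, rfl⟩)
    · exact Or.inl ⟨hg.symm h, hg.wt_symm h⟩
    · exact Or.inr ⟨α, hα, h.symm.imp And.symm And.symm, rfl⟩
  · intro a b r h
    obtain ⟨n, hn, h, -⟩ := hR a b r h
    obtain ⟨hfl, hV⟩ := hstage n hn
    refine ⟨hV ▸ ⟨b, h⟩, hV ▸ hfl.1.1.right_mem h, ?_⟩
    rintro rfl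
    exact hfl.1.1.irrefl a h
  · intro a b ha hb hab
    by_cases h : E a b
    · exact ⟨d a b, Or.inl ⟨h, rfl⟩⟩
    · obtain ⟨n, hn, hz⟩ := hzsurj s(a, b) ((mk_mem_nonEdgePairs hg.symm).mpr ⟨hab, ha, hb, h⟩)
      refine ⟨s n hn, Or.inr ⟨n, hn, ?_, rfl⟩⟩
      rw [hνn n hn]
      exact Sym2.eq_iff.mp (hz.symm.trans (he n))
  · intro a b r t h h'
    obtain ⟨n, -, ⟨-, h1⟩, -, h2⟩ := hR₂ _ _ _ _ _ _ h h'
    exact h1.symm.trans h2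
  · intro a b r h
    obtain ⟨n, hn, hab, rfl⟩ := hR a b r h
    exact (hstage n hn).1.1.2 hab
  · intro a b c r t q rab rbc rac
    obtain ⟨n, hn, ⟨hab, rfl⟩, hbc, rfl⟩ := hR₂ _ _ _ _ _ _ rab rbc
    obtain ⟨k, hk, hac, rfl⟩ := hR _ _ _ rac
    have hnk := hmax n k hn hk
    obtain ⟨hab', e1⟩ := hmono n _ (le_max_left n k) hnk a b hab
    obtain ⟨hbc', e2⟩ := hmono n _ (le_max_left n k) hnk b c hbc
    obtain ⟨hac', e3⟩ := hmono k _ (le_max_right n k) hnk a c hac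
    have hM := (hstage _ hnk).1.1.1
    rw [← e1, ← e2, ← e3, hM.edge_eq hab', hM.edge_eq hbc', hM.edge_eq hac']
    exact hM.hatd_triangle ⟨b, hab'⟩ ⟨c, hbc'⟩ (hM.right_mem hbc')

end GraphMetricPaper
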